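/- arXiv:1703.03826 — 2 statements merged into one kernel-verified Lean document; each statement's English description precedes it below -/
import Mathlib

section
/- Let A be a central simple algebra over a field F. Then the dimension of A as an F-vector space is a perfect square. -/
/-!
A simple algebra `A` is a simple module over `A ⊗ Aᵐᵒᵖ`, and if `A` is central, the endomorphisms
of this module are the scalars. By the Jacobson density theorem every linear endomorphism of `A` is
therefore given, on any finite set, by a sum of maps `a ↦ u * a * v`, so a two-sided ideal of
`B ⊗ A` is stable under all linear maps applied to the second factor. Applying coordinate
functionals of `A` to a nonzero element produces a nonzero element of `B` in the ideal; hence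
`B ⊗ A` is simple when `B` is. For `B` the algebraic closure of the base field, Wedderburn's
theorem makes `B ⊗ A` a matrix algebra, and base change preserves the dimension.
-/

open scoped TensorProduct
open Module MulOpposite

section Bimodule

attribute [local instance] instModuleTensorProductMop

variable (R : Type*) {A : Type*} [CommSemiring R] [Semiring A] [Algebra R A]

theorem tmul_op_smul_eq_mul_mul (u v a : A) : (u ⊗ₜ[R] op v) • a = u * a * v := by
  simp [TensorProduct.Algebra.smul_def, mul_assoc]

variable {R}

theorem mul_mul_mem_of_mem_subbimodule (N : Submodule (A ⊗[R] Aᵐᵒᵖ) A) {a : A} (ha : a ∈ N)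
    (u v : A) : u * a * v ∈ N :=
  tmul_op_smul_eq_mul_mul R u v a ▸ N.smul_mem _ ha

theorem map_mul_mul_of_bimodule_end (g : End (A ⊗[R] Aᵐᵒᵖ) A) (u v a : A) :
    g (u * a * v) = u * g a * v := by
  simp only [← tmul_op_smul_eq_mul_mul R, map_smul]

theorem exists_forall_bimodule_end_eq_smul [Algebra.IsCentral R A]
    (g : End (A ⊗[R] Aᵐᵒᵖ) A) : ∃ c : R, ∀ a, g a = c • a := by
  have eq_mul (a : A) : g a = a * g 1 := by simpa using map_mul_mul_of_bimodule_end g a 1 1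
  have eq_mul' (a : A) : g a = g 1 * a := by simpa using map_mul_mul_of_bimodule_end g 1 a 1
  have mem_center : g 1 ∈ Subalgebra.center R A :=
    Subalgebra.mem_center_iff.2 fun a ↦ (eq_mul a).symm.trans (eq_mul' a)
  obtain ⟨c, hc⟩ := Algebra.IsCentral.mem_center_iff R |>.1 mem_center
  exact ⟨c, fun a ↦ by rw [eq_mul', hc, Algebra.smul_def]⟩

end Bimodule

section SimpleBimodule

attribute [local instance] instModuleTensorProductMop

variable {R A : Type*} [CommRing R] [Ring A] [Algebra R A]

variable (R A) in
theorem isSimpleModule_tensorProduct_mop [IsSimpleRing A] :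
    IsSimpleModule (A ⊗[R] Aᵐᵒᵖ) A := by
  refine (isSimpleModule_iff _ _).2 ⟨fun N ↦ or_iff_not_imp_left.2 fun hN ↦ ?_⟩
  obtain ⟨a, haN, ha⟩ := N.exists_mem_ne_zero_of_ne_bot hN
  let I : TwoSidedIdeal A := .mk' N N.zero_mem N.add_mem N.neg_mem
    (fun {u x} hx ↦ by simpa using mul_mul_mem_of_mem_subbimodule N hx u 1)
    (fun {x v} hx ↦ by simpa using mul_mul_mem_of_mem_subbimodule N hx 1 v)
  have one_mem : (1 : A) ∈ N := by
    simpa [I] using IsSimpleRing.one_mem_of_ne_zero_mem I ha (by simpa [I] using haN)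
  exact N.eq_top_iff'.2 fun x ↦ by simpa using mul_mul_mem_of_mem_subbimodule N one_mem x 1

theorem exists_forall_mem_eq_mulLeftRight [Algebra.IsCentral R A] [IsSimpleRing A]
    (f : End R A) (s : Finset A) :
    ∃ t : A ⊗[R] Aᵐᵒᵖ, ∀ a ∈ s, f a = AlgHom.mulLeftRight R A t a := by
  have := isSimpleModule_tensorProduct_mop R A
  let f' : End (End (A ⊗[R] Aᵐᵒᵖ) A) A :=
    { f with
      map_smul' := fun g a ↦ by
        obtain ⟨c, hc⟩ := exists_forall_bimodule_end_eq_smul g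
        simp [hc] }
  exact jacobson_density f' s

end SimpleBimodule

section LTensor

variable {R : Type*} [CommSemiring R]

theorem lTensor_smulRight {M N P : Type*} [AddCommMonoid M] [Module R M] [AddCommMonoid N]
    [Module R N] [AddCommMonoid P] [Module R P] (φ : N →ₗ[R] R) (p : P) (x : M ⊗[R] N) :
    (φ.smulRight p).lTensor M x = TensorProduct.rid R M (φ.lTensor M x) ⊗ₜ p := by
  induction x with
  | zero => simp
  | add x y hx hy => simp only [map_add, hx, hy, TensorProduct.add_tmul]
  | tmul m n => simp [TensorProduct.smul_tmul]

theorem lTensor_mulLeftRight_tmul_op {A B : Type*} [Semiring A] [Algebra R A] [Semiring B]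
    [Algebra R B] (u v : A) (x : B ⊗[R] A) :
    (AlgHom.mulLeftRight R A (u ⊗ₜ op v)).lTensor B x = (1 ⊗ₜ u) * x * (1 ⊗ₜ v) := by
  induction x with
  | zero => simp
  | add x y hx hy => simp only [map_add, mul_add, add_mul, hx, hy]
  | tmul b a => simp

end LTensor

section TensorProductIdeal

variable {R A B : Type*} [CommRing R] [Ring A] [Algebra R A] [Ring B] [Algebra R B]

theorem lTensor_mulLeftRight_mem_twoSidedIdeal (I : TwoSidedIdeal (B ⊗[R] A))
    {x : B ⊗[R] A} (hx : x ∈ I) (t : A ⊗[R] Aᵐᵒᵖ) :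
    (AlgHom.mulLeftRight R A t).lTensor B x ∈ I := by
  induction t with
  | zero => simp [I.zero_mem]
  | add s t hs ht => simpa [LinearMap.lTensor_add] using I.add_mem hs ht
  | tmul u v =>
    rw [← op_unop v, lTensor_mulLeftRight_tmul_op]
    exact I.mul_mem_right _ _ (I.mul_mem_left _ _ hx)

theorem lTensor_mem_twoSidedIdeal [Algebra.IsCentral R A] [IsSimpleRing A]
    (I : TwoSidedIdeal (B ⊗[R] A)) {x : B ⊗[R] A} (hx : x ∈ I) (f : End R A) :
    f.lTensor B x ∈ I := by
  classical
  obtain ⟨s, hs⟩ := TensorProduct.exists_finset x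
  obtain ⟨t, ht⟩ := exists_forall_mem_eq_mulLeftRight f (s.image Prod.snd)
  have lTensor_eq : f.lTensor B x = (AlgHom.mulLeftRight R A t).lTensor B x := by
    simp only [hs, map_sum, LinearMap.lTensor_tmul]
    exact Finset.sum_congr rfl fun p hp ↦ by rw [ht _ (Finset.mem_image_of_mem _ hp)]
  exact lTensor_eq ▸ lTensor_mulLeftRight_mem_twoSidedIdeal I hx t

end TensorProductIdeal

section CentralSimple

variable {F A B : Type*} [Field F] [Ring A] [Algebra F A] [Ring B] [Algebra F B]
  [Algebra.IsCentral F A] [IsSimpleRing A]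

theorem exists_ne_zero_tmul_one_mem (I : TwoSidedIdeal (B ⊗[F] A)) {x : B ⊗[F] A} (hx : x ∈ I)
    (hx0 : x ≠ 0) : ∃ b : B, b ≠ 0 ∧ b ⊗ₜ 1 ∈ I := by
  classical
  let basis := Basis.ofVectorSpace F A
  let coords := TensorProduct.equivFinsuppOfBasisRight (M := B) basis
  obtain ⟨i, hi⟩ : ∃ i, coords x i ≠ 0 :=
    Finsupp.ne_iff.1 (coords.map_ne_zero_iff.2 hx0)
  refine ⟨coords x i, hi, ?_⟩
  simp only [coords, TensorProduct.equivFinsuppOfBasisRight_apply, ← lTensor_smulRight]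
  exact lTensor_mem_twoSidedIdeal I hx ((basis.coord i).smulRight 1)

variable (F A B) in
theorem isSimpleRing_tensorProduct_of_isCentral [IsSimpleRing B] : IsSimpleRing (B ⊗[F] A) := by
  refine .of_eq_bot_or_eq_top fun I ↦ or_iff_not_imp_left.2 fun hI ↦ ?_
  obtain ⟨x, hx, hx0⟩ : ∃ x ∈ I, x ≠ 0 := by
    by_contra! h
    exact hI (le_bot_iff.1 fun x hx ↦ (TwoSidedIdeal.mem_bot _).2 (h x hx))
  obtain ⟨b, hb0, hb⟩ := exists_ne_zero_tmul_one_mem I hx hx0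
  let ι : B →ₐ[F] B ⊗[F] A := Algebra.TensorProduct.includeLeft
  have one_mem : 1 ∈ I.comap ι :=
    IsSimpleRing.one_mem_of_ne_zero_mem _ hb0 ((TwoSidedIdeal.mem_comap ι).2 hb)
  exact I.one_mem_iff.1 (map_one ι ▸ (TwoSidedIdeal.mem_comap ι).1 one_mem)

end CentralSimple

/-- The dimension of a central simple algebra over a field is a perfect square. -/
theorem csa_dim_is_square (F A : Type*) [Field F] [Ring A] [Algebra F A]
    [Algebra.IsCentral F A] [IsSimpleRing A] [FiniteDimensional F A] :
    ∃ n : ℕ, Module.finrank F A = n ^ 2 := by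
  let K := AlgebraicClosure F
  have := isSimpleRing_tensorProduct_of_isCentral F A K
  obtain ⟨n, _, ⟨e⟩⟩ := IsSimpleRing.exists_algEquiv_matrix_of_isAlgClosed K (K ⊗[F] A)
  refine ⟨n, ?_⟩
  calc finrank F A = finrank K (K ⊗[F] A) := finrank_baseChange.symm
    _ = finrank K (Matrix (Fin n) (Fin n) K) := e.toLinearEquiv.finrank_eq
    _ = n ^ 2 := by simp [finrank_matrix, sq]
end

section
/- Let (A, σ) be a central simple algebra of degree 4 with symplectic involution and let x ∈ Symd(A, σ) be a nonzero element with Nrp_σ(x) = 0. Then the right ideal xA has reduced dimension 2, and if moreover Trp_σ(x) = 0, then xA is σ-isotropic, i.e. σ(xA)·(xA) = (0). -/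
/-!
Write `t = Trp x`, so that `x² = t x`. As `x` is fixed by `σ`, we have `σ(xa)(xb) = σ(a) x² b`,
which vanishes when `t = 0`.

For the dimension, note that `x z = 0` forces `dim xA + dim zA ≤ dim A`, whereas an identity
`1 = x p + q x r` forces `dim A ≤ 2 dim xA`. If `t = 0`, take `z = x`; the polarized equation
`x y + y x = Trp(y) x + c` yields such an identity as soon as `c ≠ 0`, and if `c` always vanished,
then `x y x = 0` for all symmetrized `y`, which is impossible in a simple ring. If `t ≠ 0`, then
`f = t⁻¹ x` is a symmetric idempotent. For `u ∈ fA(1 - f)`, the quadratic equation of `u + σ(u)`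
gives `u σ(u) = c f` and `σ(u) u = c (1 - f)` with the same scalar `c`, and some `u` has `c ≠ 0`;
this provides identities for both `f` and `z = 1 - f`. Finally `f ≠ 1`, because otherwise all
symmetrized elements would be scalar.
-/

open LinearMap Module

theorem eq_zero_or_eq_zero_of_forall_mul_mul_eq_zero {A : Type*} [Ring A] [IsSimpleRing A] {u v : A}
    (h : ∀ a, u * a * v = 0) : u = 0 ∨ v = 0 := by
  let I : TwoSidedIdeal A := .mk' {z | ∀ a, u * a * z = 0} (by simp)
    (fun hy hz a ↦ by rw [mul_add, hy, hz, add_zero])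
    (fun hz a ↦ by rw [mul_neg, hz, neg_zero])
    (fun {y z} hz a ↦ by rw [← mul_assoc, mul_assoc u, hz])
    (fun {y z} hy a ↦ by rw [← mul_assoc, hy, zero_mul])
  have mem_I {z : A} : z ∈ I ↔ ∀ a, u * a * z = 0 := TwoSidedIdeal.mem_mk' ..
  refine or_iff_not_imp_right.mpr fun hv ↦ ?_
  simpa using mem_I.mp (IsSimpleRing.one_mem_of_ne_zero_mem I hv (mem_I.mpr h)) 1

section RightIdealDimension

variable {F A : Type*} [Field F] [Ring A] [Algebra F A] [FiniteDimensional F A]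

theorem finrank_range_mulLeft_add_le_of_mul_eq_zero {x z : A} (h : x * z = 0) :
    finrank F (range (mulLeft F x)) + finrank F (range (mulLeft F z)) ≤ finrank F A := by
  rw [← finrank_range_add_finrank_ker (mulLeft F x)]
  gcongr
  refine Submodule.finrank_mono (range_le_ker_iff.mpr ?_)
  ext a
  simp only [comp_apply, mulLeft_apply, ← mul_assoc, h, zero_mul, LinearMap.zero_apply]

theorem finrank_le_two_mul_finrank_range_mulLeft {x p q r : A} (h : x * p + q * x * r = 1) :
    finrank F A ≤ 2 * finrank F (range (mulLeft F x)) := by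
  have hsup : range (mulLeft F x) ⊔ (range (mulLeft F x)).map (mulLeft F q) = ⊤ := by
    refine eq_top_iff.mpr fun a _ ↦ Submodule.mem_sup.mpr
      ⟨x * (p * a), ⟨_, rfl⟩, q * (x * (r * a)), ⟨_, ⟨_, rfl⟩, rfl⟩, ?_⟩
    simpa only [add_mul, mul_assoc, one_mul] using congrArg (· * a) h
  calc finrank F A
      = finrank F ↥(range (mulLeft F x) ⊔ (range (mulLeft F x)).map (mulLeft F q)) := by
        rw [hsup, finrank_top]
    _ ≤ finrank F (range (mulLeft F x)) + finrank F ((range (mulLeft F x)).map (mulLeft F q)) :=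
        Submodule.finrank_add_le_finrank_add_finrank _ _
    _ ≤ finrank F (range (mulLeft F x)) + finrank F (range (mulLeft F x)) := by
        gcongr
        exact Submodule.finrank_map_le _ _
    _ = 2 * finrank F (range (mulLeft F x)) := (two_mul _).symm

end RightIdealDimension

/-- Membership in `Symd(A, σ)`, the set of sums `a + σ(a)`, with the involution `σ` written `star`.
In characteristic 2 this can be stronger than being self-adjoint. -/
def IsSymmetrized {A : Type*} [Add A] [Star A] (x : A) : Prop :=
  ∃ a, x = a + star a

theorem isSymmetrized_add_star {A : Type*} [Add A] [Star A] (a : A) : IsSymmetrized (a + star a) :=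
  ⟨a, rfl⟩

namespace IsSymmetrized

theorem isSelfAdjoint {A : Type*} [AddCommMonoid A] [StarAddMonoid A] {x : A}
    (hx : IsSymmetrized x) : IsSelfAdjoint x := by
  obtain ⟨a, rfl⟩ := hx
  exact .add_star_self a

theorem add {A : Type*} [AddCommMonoid A] [StarAddMonoid A] {x y : A} (hx : IsSymmetrized x)
    (hy : IsSymmetrized y) : IsSymmetrized (x + y) := by
  obtain ⟨a, rfl⟩ := hx
  obtain ⟨b, rfl⟩ := hy
  exact ⟨a + b, by rw [star_add, add_add_add_comm]⟩

theorem conjugate' {A : Type*} [NonUnitalSemiring A] [StarRing A] {x : A} (hx : IsSymmetrized x)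
    (z : A) : IsSymmetrized (star z * x * z) := by
  obtain ⟨a, rfl⟩ := hx
  exact ⟨star z * a * z, by simp only [star_mul, star_star, mul_add, add_mul, mul_assoc]⟩

theorem eq_zero_of_forall_mul_mul_eq_zero {A : Type*} [Ring A] [StarRing A] [IsSimpleRing A] {x : A}
    (hx : IsSymmetrized x) (h : ∀ y, IsSymmetrized y → x * y * x = 0) : x = 0 := by
  have hstar (a : A) : x * star a * x = -(x * a * x) := by
    rw [eq_neg_iff_add_eq_zero, add_comm, ← add_mul, ← mul_add, h _ (isSymmetrized_add_star a)]
  have hcube (a : A) : x * a * x * a * x = 0 := by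
    have := h _ (hx.conjugate' a)
    rwa [← mul_assoc, ← mul_assoc, hstar, neg_mul, neg_mul, neg_eq_zero] at this
  -- Linearize `hcube` at `a` in the direction `b * x * a`.
  have hsq (a b : A) : x * a * x * b * (x * a * x) = 0 := by
    calc x * a * x * b * (x * a * x)
        = x * (a + b * x * a) * x * (a + b * x * a) * x - x * a * x * a * x
            - x * b * (x * a * x * a * x) - x * (b * x * a) * x * (b * x * a) * x := by noncomm_ring
      _ = 0 := by simp only [hcube, mul_zero, sub_zero]
  have hxx (a : A) : x * a * x = 0 :=
    (eq_zero_or_eq_zero_of_forall_mul_mul_eq_zero (hsq a)).elim id id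
  exact (eq_zero_or_eq_zero_of_forall_mul_mul_eq_zero hxx).elim id id

theorem two_mul_finrank_range_mulLeft_of_mul_self_eq_zero {F A : Type*} [Field F] [Ring A]
    [StarRing A] [Algebra F A] [IsSimpleRing A] [FiniteDimensional F A] {x : A}
    (hx : IsSymmetrized x) (hx0 : x ≠ 0) (hxx : x * x = 0)
    (h : ∀ y, IsSymmetrized y → ∃ s c : F, x * y + y * x = s • x + algebraMap F A c) :
    2 * finrank F (range (mulLeft F x)) = finrank F A := by
  obtain ⟨y, hy, hxyx⟩ : ∃ y, IsSymmetrized y ∧ x * y * x ≠ 0 := by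
    contrapose! hx0
    exact hx.eq_zero_of_forall_mul_mul_eq_zero hx0
  obtain ⟨s, c, hc⟩ := h y hy
  rw [Algebra.algebraMap_eq_smul_one] at hc
  have hc0 : c ≠ 0 := by
    rintro rfl
    apply hxyx
    simpa [mul_add, ← mul_assoc, hxx] using congrArg (x * ·) hc
  have hone : x * (c⁻¹ • (y - s • 1)) + (c⁻¹ • y) * x * 1 = 1 := by
    simp only [mul_smul_comm, smul_mul_assoc, mul_sub, mul_one]
    rw [← smul_add, sub_add_eq_add_sub, hc, add_sub_cancel_left, inv_smul_smul₀ hc0]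
  have hle := finrank_range_mulLeft_add_le_of_mul_eq_zero (F := F) hxx
  have hge := finrank_le_two_mul_finrank_range_mulLeft (F := F) hone
  lia

end IsSymmetrized

section Projection

variable {A : Type*} [Ring A] [StarRing A]

theorem isStarProjection_inv_smul {F : Type*} [Field F] [Star F] [TrivialStar F] [Algebra F A]
    [StarModule F A] {x : A} {t : F} (hx : IsSelfAdjoint x) (ht : t ≠ 0) (hxx : x * x = t • x) :
    IsStarProjection (t⁻¹ • x) where
  isIdempotentElem := by
    rw [IsIdempotentElem, smul_mul_smul_comm, hxx, smul_smul, inv_mul_cancel_right₀ ht]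
  isSelfAdjoint := .smul (.all _) hx

theorem eq_zero_or_eq_one_of_isStarProjection [IsSimpleRing A] {f : A} (hf : IsStarProjection f)
    (hl : ∀ u, f * u = u → u * f = 0 → u * star u = 0)
    (hr : ∀ u, f * u = u → u * f = 0 → star u * u = 0) : f = 0 ∨ f = 1 := by
  have hf_corner (a : A) : f * (f * a * (1 - f)) = f * a * (1 - f) := by
    rw [mul_assoc f, hf.isIdempotentElem.mul_self_mul]
  have hcorner_f (a : A) : f * a * (1 - f) * f = 0 := by
    rw [mul_assoc, hf.one_sub_mul_self, mul_zero]
  have hzero {u : A} (hfu : f * u = u) (huf : u * f = 0) (b : A) : u * b * u = 0 := by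
    set v := f * star b * (1 - f) with hv
    have hstar_v : star v = (1 - f) * b * f := by
      rw [hv, star_mul, star_mul, star_star, hf.isSelfAdjoint.star_eq,
        hf.one_sub.isSelfAdjoint.star_eq, mul_assoc]
    have hpolar : u * star v + v * star u = 0 := by
      have huv := hl (u + v) (by rw [mul_add, hfu, hf_corner])
        (by rw [add_mul, huf, hcorner_f, zero_add])
      rwa [star_add, add_mul, mul_add, mul_add, hl u hfu huf, hl v (hf_corner _) (hcorner_f _),
        zero_add, add_zero] at huv
    calc u * b * u = u * ((1 - f) * b * f) * u := by
          simp only [mul_assoc, hfu, sub_mul, one_mul, mul_sub]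
          rw [← mul_assoc u f, huf, zero_mul, sub_zero]
      _ = (u * star v + v * star u) * u := by
          rw [hstar_v, add_mul, mul_assoc v, hr u hfu huf, mul_zero, add_zero]
      _ = 0 := by rw [hpolar, zero_mul]
  have hcorner (a : A) : f * a * (1 - f) = 0 :=
    (eq_zero_or_eq_zero_of_forall_mul_mul_eq_zero
      (hzero (hf_corner a) (hcorner_f a))).elim id id
  exact (eq_zero_or_eq_zero_of_forall_mul_mul_eq_zero hcorner).imp_right
    fun h ↦ (sub_eq_zero.mp h).symm

variable {F : Type*} [Field F] [Algebra F A]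

theorem exists_mul_star_eq_smul_and_star_mul_eq_smul {f u : A} (hf : IsStarProjection f)
    (hfu : f * u = u) (huf : u * f = 0)
    (hquad : ∃ s c : F, (u + star u) * (u + star u) = s • (u + star u) + algebraMap F A c) :
    ∃ c : F, u * star u = c • f ∧ star u * u = c • (1 - f) := by
  obtain ⟨s, c, hc⟩ := hquad
  have hstar_f : star u * f = star u := by rw [← hf.isSelfAdjoint.star_eq, ← star_mul, hfu]
  have hf_star : f * star u = 0 := by rw [← hf.isSelfAdjoint.star_eq, ← star_mul, huf, star_zero]
  have hcompress (e : A) :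
      e * (u + star u) * ((u + star u) * e) = s • (e * (u + star u) * e) + c • (e * e) := by
    rw [mul_assoc, ← mul_assoc _ _ e, hc, Algebra.algebraMap_eq_smul_one]
    simp only [add_mul, mul_add, smul_mul_assoc, mul_smul_comm, one_mul, mul_assoc]
  refine ⟨c, ?_, ?_⟩
  · simpa only [mul_add, add_mul, hfu, huf, hstar_f, hf_star, hf.isIdempotentElem.eq, add_zero,
      zero_add, smul_zero] using hcompress f
  · simpa [mul_add, add_mul, mul_sub, sub_mul, hfu, huf, hstar_f, hf_star,
      hf.isIdempotentElem.eq] using hcompress (1 - f)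

theorem two_mul_finrank_range_mulLeft_of_isStarProjection [IsSimpleRing A] [FiniteDimensional F A]
    {f : A} (hf : IsStarProjection f) (hf0 : f ≠ 0) (hf1 : f ≠ 1)
    (h : ∀ y : A, IsSymmetrized y → ∃ s c : F, y * y = s • y + algebraMap F A c) :
    2 * finrank F (range (mulLeft F f)) = finrank F A := by
  have hcorner (u : A) (hfu : f * u = u) (huf : u * f = 0) :=
    exists_mul_star_eq_smul_and_star_mul_eq_smul hf hfu huf (h _ (isSymmetrized_add_star u))
  obtain ⟨u, c, hfu, huf, hl, hr, hc⟩ : ∃ (u : A) (c : F), f * u = u ∧ u * f = 0 ∧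
      u * star u = c • f ∧ star u * u = c • (1 - f) ∧ c ≠ 0 := by
    by_contra! hc
    refine (eq_zero_or_eq_one_of_isStarProjection hf ?_ ?_).elim hf0 hf1 <;>
    · intro u hfu huf
      obtain ⟨c, hl, hr⟩ := hcorner u hfu huf
      simp only [hl, hr, hc u c hfu huf hl hr, zero_smul]
  have hone_f : f * 1 + (c⁻¹ • star u) * f * u = 1 := by
    rw [mul_assoc, hfu, smul_mul_assoc, hr, inv_smul_smul₀ hc, mul_one, add_sub_cancel]
  have hone_g : (1 - f) * 1 + (c⁻¹ • u) * (1 - f) * star u = 1 := by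
    rw [smul_mul_assoc, mul_sub, huf, sub_zero, mul_one, mul_one, smul_mul_assoc, hl,
      inv_smul_smul₀ hc, sub_add_cancel]
  have hf_ge := finrank_le_two_mul_finrank_range_mulLeft (F := F) hone_f
  have hg_ge := finrank_le_two_mul_finrank_range_mulLeft (F := F) hone_g
  have hle := finrank_range_mulLeft_add_le_of_mul_eq_zero (F := F) hf.mul_one_sub_self
  lia

end Projection

section ScalarTrace

variable {F A : Type*} [Field F] [Ring A] [StarRing A] [Algebra F A] {T : A → F}

theorem star_eq_smul_one_sub (hT : ∀ a, a + star a = algebraMap F A (T a)) (a : A) :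
    star a = T a • (1 : A) - a := by
  rw [← Algebra.algebraMap_eq_smul_one, ← hT, add_sub_cancel_left]

theorem star_commutator_eq_neg (hT : ∀ a, a + star a = algebraMap F A (T a)) (b c : A) :
    star (b * c - c * b) = -(b * c - c * b) := by
  rw [star_sub, star_mul, star_mul]
  simp only [star_eq_smul_one_sub hT, mul_sub, sub_mul, smul_mul_assoc, mul_smul_comm, one_mul,
    mul_one]
  module

theorem mul_add_mul_eq_of_add_star_eq_algebraMap (hT : ∀ a, a + star a = algebraMap F A (T a))
    (a b : A) : a * b + b * a = T a • b + T b • a + (T (a * b) - T a * T b) • (1 : A) := by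
  have hmul := star_mul a b
  simp only [star_eq_smul_one_sub hT, mul_sub, sub_mul, smul_mul_assoc, mul_smul_comm, one_mul,
    mul_one] at hmul
  linear_combination (norm := module) -hmul

theorem finrank_range_mulLeft_commutator_le_four (hT : ∀ a, a + star a = algebraMap F A (T a))
    (b c : A) : finrank F (range (mulLeft F (b * c - c * b))) ≤ 4 := by
  classical
  have hle : range (mulLeft F (b * c - c * b)) ≤
      Submodule.span F (({1, b, c, c * b} : Finset A) : Set A) := by
    rintro _ ⟨a, rfl⟩
    have hJordan : (b * c - c * b) * a =
        (c * a) * b + b * (c * a) - c * (a * b + b * a) := by noncomm_ring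
    have hspan : (b * c - c * b) * a = (T (c * a * b) - T (c * a) * T b) • (1 : A) + T (c * a) • b
        - (T (a * b) - T a * T b) • c - T a • (c * b) := by
      simp only [hJordan, mul_add_mul_eq_of_add_star_eq_algebraMap hT, mul_add, mul_smul_comm,
        mul_one]
      module
    rw [mulLeft_apply, hspan]
    refine sub_mem (sub_mem (add_mem ?_ ?_) ?_) ?_ <;>
      exact Submodule.smul_mem _ _ (Submodule.subset_span (by simp))
  calc finrank F (range (mulLeft F (b * c - c * b)))
      ≤ finrank F (Submodule.span F (({1, b, c, c * b} : Finset A) : Set A)) :=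
        Submodule.finrank_mono hle
    _ ≤ ({1, b, c, c * b} : Finset A).card := finrank_span_finset_le_card _
    _ ≤ 4 := Finset.card_le_four

theorem exists_mul_commutator_add_star_ne_zero [IsSimpleRing A]
    (hT : ∀ a, a + star a = algebraMap F A (T a)) {b c : A} (hbc : b * c - c * b ≠ 0) :
    ∃ a, a * (b * c - c * b) + star (a * (b * c - c * b)) ≠ 0 := by
  by_contra! h
  set u := b * c - c * b with hu
  have hswap (a : A) : a * u = u * star a := by
    have := h a
    rwa [star_mul, star_commutator_eq_neg hT, neg_mul, ← sub_eq_add_neg, sub_eq_zero] at this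
  have hcomm : u * (b * c) = u * (c * b) := by
    calc u * (b * c) = star c * star b * u := by rw [hswap, star_mul, star_star, star_star]
      _ = u * (c * b) := by
          rw [mul_assoc, hswap, ← mul_assoc, hswap, star_star, star_star, mul_assoc]
  have huu : u * u = 0 := by rw [hu, mul_sub, sub_eq_zero, hcomm]
  have huau (a : A) : u * a * u = 0 := by rw [mul_assoc, hswap, ← mul_assoc, huu, zero_mul]
  exact (eq_zero_or_eq_zero_of_forall_mul_mul_eq_zero huau).elim hbc hbc

theorem finrank_le_eight_of_isSymmetrized_mem_bot [Algebra.IsCentral F A] [IsSimpleRing A]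
    [FiniteDimensional F A] (h : ∀ y : A, IsSymmetrized y → y ∈ (⊥ : Subalgebra F A)) :
    finrank F A ≤ 8 := by
  choose T hT using fun a ↦ Algebra.mem_bot.mp (h _ (isSymmetrized_add_star a))
  replace hT (a : A) : a + star a = algebraMap F A (T a) := (hT a).symm
  by_cases hcomm : ∀ b c : A, b * c = c * b
  · have hbot : (⊥ : Subalgebra F A) = ⊤ := by
      rw [← Algebra.IsCentral.center_eq_bot F A, eq_top_iff]
      exact fun a _ ↦ Subalgebra.mem_center_iff.mpr fun b ↦ hcomm b a
    rw [Subalgebra.bot_eq_top_iff_finrank_eq_one.mp hbot]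
    norm_num
  push Not at hcomm
  obtain ⟨b, c, hbc⟩ := hcomm
  obtain ⟨a, ha⟩ := exists_mul_commutator_add_star_ne_zero hT (sub_ne_zero.mpr hbc)
  have hrank := finrank_range_mulLeft_commutator_le_four hT b c
  have hstar := star_commutator_eq_neg hT b c
  set u := b * c - c * b
  set t := T (a * u)
  have htrace : t • (1 : A) = a * u - u * star a := by
    rw [← Algebra.algebraMap_eq_smul_one, ← hT, star_mul, hstar, neg_mul, sub_eq_add_neg]
  have ht : t ≠ 0 := fun ht ↦ ha (by rw [hT]; change algebraMap F A t = 0; rw [ht, map_zero])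
  have hone : u * (-(t⁻¹ • star a)) + (t⁻¹ • a) * u * 1 = 1 := by
    rw [mul_neg, mul_smul_comm, smul_mul_assoc, mul_one, neg_add_eq_sub, ← smul_sub, ← htrace,
      inv_smul_smul₀ ht]
  exact (finrank_le_two_mul_finrank_range_mulLeft hone).trans (by lia)

end ScalarTrace

theorem mul_add_mul_eq_of_quadratic {F A : Type*} [CommRing F] [Ring A] [Algebra F A] {x y : A}
    {s t p q r : F} (hx : x ^ 2 - s • x + algebraMap F A p = 0)
    (hy : y ^ 2 - t • y + algebraMap F A q = 0)
    (hxy : (x + y) ^ 2 - (s + t) • (x + y) + algebraMap F A r = 0) :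
    x * y + y * x = t • x + s • y + algebraMap F A (p + q - r) := by
  simp only [sq, mul_add, add_mul, Algebra.algebraMap_eq_smul_one] at *
  linear_combination (norm := module) hxy - hx - hy

theorem mem_bot_of_mul_add_mul_eq_of_eq_smul_one {F A : Type*} [Field F] [Ring A] [Algebra F A]
    {x y : A} {s t c : F} (hx : x = t • 1) (ht : t ≠ 0)
    (h : x * y + y * x = s • x + t • y + algebraMap F A c) : y ∈ (⊥ : Subalgebra F A) := by
  subst hx
  refine Algebra.mem_bot.mpr ⟨t⁻¹ * (s * t + c), ?_⟩
  rw [smul_one_mul, mul_smul_one, add_right_comm, add_left_inj] at h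
  rw [map_mul, ← Algebra.smul_def, map_add, Algebra.algebraMap_eq_smul_one (s * t), mul_smul, ← h,
    inv_smul_smul₀ ht]

theorem IsSymmetrized.two_mul_finrank_range_mulLeft_eq {F A : Type*} [Field F] [Star F]
    [TrivialStar F] [Ring A] [StarRing A] [Algebra F A] [StarModule F A] [Algebra.IsCentral F A]
    [IsSimpleRing A] [FiniteDimensional F A] (hdim : 8 < finrank F A) {T : A →ₗ[F] F} {N : A → F}
    (hquad : ∀ y : A, IsSymmetrized y → y ^ 2 - T y • y + algebraMap F A (N y) = 0) {x : A}
    (hx : IsSymmetrized x) (hx0 : x ≠ 0) (hxx : x * x = T x • x) :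
    2 * finrank F (range (mulLeft F x)) = finrank F A := by
  have hpolar (y : A) (hy : IsSymmetrized y) :
      ∃ c : F, x * y + y * x = T y • x + T x • y + algebraMap F A c :=
    ⟨_, mul_add_mul_eq_of_quadratic (hquad x hx) (hquad y hy)
      (by simpa only [map_add] using hquad (x + y) (hx.add hy))⟩
  by_cases ht : T x = 0
  · refine hx.two_mul_finrank_range_mulLeft_of_mul_self_eq_zero (F := F) hx0
      (by rw [hxx, ht, zero_smul]) fun y hy ↦ ⟨T y, ?_⟩
    simpa only [ht, zero_smul, add_zero] using hpolar y hy
  have hf1 : (T x)⁻¹ • x ≠ 1 := fun hf ↦ by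
    have hxt : x = T x • 1 := by rw [← hf, smul_inv_smul₀ ht]
    refine hdim.not_ge (finrank_le_eight_of_isSymmetrized_mem_bot fun y hy ↦ ?_)
    obtain ⟨c, hc⟩ := hpolar y hy
    exact mem_bot_of_mul_add_mul_eq_of_eq_smul_one hxt ht hc
  have hrange : range (mulLeft F ((T x)⁻¹ • x)) = range (mulLeft F x) := by
    rw [← range_smul (mulLeft F x) _ (inv_ne_zero ht)]
    congr 1
    ext a
    simp
  rw [← hrange]
  refine two_mul_finrank_range_mulLeft_of_isStarProjection
    (isStarProjection_inv_smul hx.isSelfAdjoint ht hxx) (smul_ne_zero (inv_ne_zero ht) hx0) hf1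
    fun y hy ↦ ⟨T y, -N y, ?_⟩
  rw [map_neg, ← sub_eq_add_neg, ← sub_eq_zero, ← hquad y hy]
  noncomm_ring

/-- Let `(A, σ)` be a central simple algebra of degree 4 with symplectic involution and
`x ∈ Symd(A, σ)` nonzero with `Nrp_σ(x) = 0`.  Then the right ideal `xA` has reduced
dimension 2 (i.e. `dim_F xA = 8`), and if moreover `Trp_σ(x) = 0` then `xA` is `σ`-isotropic:
`σ(xA)·(xA) = (0)`. -/
theorem ideal_of_isotropic_vector (F A : Type*) [Field F] [Ring A] [Algebra F A]
    [Algebra.IsCentral F A] [IsSimpleRing A] [FiniteDimensional F A]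
    (hdeg : Module.finrank F A = 16)
    (σ : A →ₗ[F] A) (hanti : ∀ x y : A, σ (x * y) = σ y * σ x)
    (hinv : ∀ a : A, σ (σ a) = a)
    (Symd : Submodule F A)
    (hSymd : (Symd : Set A) = {x : A | ∃ a : A, x = a + σ a})
    (Trp : A →ₗ[F] F) (Nrp : A → F)
    (hCH : ∀ a ∈ Symd, a ^ 2 - Trp a • a + algebraMap F A (Nrp a) = 0)
    (x : A) (hx : x ∈ Symd) (hxne : x ≠ 0) (hNrp : Nrp x = 0) :
    (∃ S : Submodule F A, (S : Set A) = {y : A | ∃ a : A, y = x * a} ∧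
      Module.finrank F S = 8) ∧
    (Trp x = 0 → ∀ a b : A, σ (x * a) * (x * b) = 0) := by
  let : StarRing A :=
    { star := σ, star_involutive := hinv, star_mul := hanti, star_add := map_add σ }
  let : Star F := ⟨id⟩
  have : TrivialStar F := ⟨fun _ ↦ rfl⟩
  have : StarModule F A := ⟨map_smul σ⟩
  have mem_Symd (y : A) : y ∈ Symd ↔ IsSymmetrized y := Set.ext_iff.mp hSymd y
  have hsymm : IsSymmetrized x := (mem_Symd x).mp hx
  have hxx : x * x = Trp x • x := by
    simpa only [hNrp, map_zero, add_zero, sub_eq_zero, sq] using hCH x hx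
  refine ⟨⟨LinearMap.range (LinearMap.mulLeft F x), ?_, ?_⟩, fun htr a b ↦ ?_⟩
  · ext y
    simp [eq_comm]
  · have hdim := hsymm.two_mul_finrank_range_mulLeft_eq (by lia)
      (fun y hy ↦ hCH y ((mem_Symd y).mpr hy)) hxne hxx
    lia
  · calc σ (x * a) * (x * b) = σ a * (x * x) * b := by
          rw [hanti, show σ x = x from hsymm.isSelfAdjoint, mul_assoc, mul_assoc, mul_assoc]
      _ = 0 := by rw [hxx, htr, zero_smul, mul_zero, zero_mul]
end
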